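/- arXiv:1609.08751 — 3 statements merged into one kernel-verified Lean document; each statement's English description precedes it below -/
import Mathlib

section
/- Let d ≥ 2 and λ ∈ [0,1). Let T x = (x₁/‖x‖) e₁ + ((1 − 1/‖x‖) x₂ + λ) e₂ + (1 − 1/‖x‖) ∑_{j=3}^d x_j e_j for x ≠ 0. Then for x ∈ ℝ^d \ {0}, T x = x if and only if x = x* or x = x_*, where x* = √(1−λ²) e₁ + λ e₂ and x_* = −√(1−λ²) e₁ + λ e₂; i.e., the only fixed points of T are the two intersection points of the unit sphere with the line L_λ. -/
noncomputable section

open Metric Set Filter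

/-- Euclidean space `ℝ^d` with `d = d' + 2 ≥ 2`. -/
abbrev Euc (d : ℕ) := EuclideanSpace ℝ (Fin (d + 2))

/-- The standard basis vectors. -/
def e (d : ℕ) (j : Fin (d + 2)) : Euc d := EuclideanSpace.single j 1

/-- The Douglas–Rachford operator for the unit sphere and the line
`L_λ = {t e₁ + λ e₂}`, given by its explicit formula
`T x = (x₁/‖x‖) e₁ + ((1 − 1/‖x‖) x₂ + λ) e₂ + (1 − 1/‖x‖) ∑_{j=3}^d x_j e_j`. -/
def DR (d : ℕ) (lam : ℝ) (x : Euc d) : Euc d :=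
  (x 0 / ‖x‖) • e d 0 + ((1 - 1 / ‖x‖) * x 1 + lam) • e d 1 +
    ∑ j ∈ Finset.univ.filter (fun j : Fin (d + 2) => 2 ≤ (j : ℕ)),
      ((1 - 1 / ‖x‖) * x j) • e d j

/-- The intersection point `x* = √(1−λ²) e₁ + λ e₂`. -/
def xStar (d : ℕ) (lam : ℝ) : Euc d := Real.sqrt (1 - lam ^ 2) • e d 0 + lam • e d 1

/-- The second intersection point `x_* = −√(1−λ²) e₁ + λ e₂`. -/
def xStarMinus (d : ℕ) (lam : ℝ) : Euc d :=
  (-Real.sqrt (1 - lam ^ 2)) • e d 0 + lam • e d 1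

/-!
For `x ≠ 0`, comparing coordinates shows that `T x = x` exactly when `x` lies on the line
`L_{λ‖x‖}` and either `‖x‖ = 1` or `x₁ = 0`. In the second case `x = λ‖x‖ e₂`, so taking norms
gives `|λ| = 1`. Hence for `|λ| ≠ 1` only `‖x‖ = 1` remains, and then `L_{λ‖x‖}` is `L_λ`.
-/

section

variable {d : ℕ} {lam c : ℝ} {x : Euc d} {i : Fin (d + 2)}

/-- The line `L_c = {t e₁ + c e₂ : t ∈ ℝ}`, parallel to the first coordinate axis. -/
def line (d : ℕ) (c : ℝ) : Set (Euc d) := range fun t : ℝ => t • e d 0 + c • e d 1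

theorem e_apply (d : ℕ) (j i : Fin (d + 2)) : e d j i = if i = j then 1 else 0 := by
  simp [e]

theorem norm_sq_smul_e_zero_add_smul_e_one (d : ℕ) (a b : ℝ) :
    ‖a • e d 0 + b • e d 1‖ ^ 2 = a ^ 2 + b ^ 2 := by
  have orthogonal : inner ℝ (e d 0) (e d 1) = 0 := by
    simp [e, EuclideanSpace.inner_single_left]
  have norm_e (j : Fin (d + 2)) : ‖e d j‖ = 1 := by simp [e]
  simp [norm_add_sq_real, inner_smul_left, inner_smul_right, norm_smul, orthogonal, norm_e]

theorem mem_line_iff : x ∈ line d c ↔ x = x 0 • e d 0 + c • e d 1 := by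
  refine ⟨?_, fun h => ⟨x 0, h.symm⟩⟩
  rintro ⟨t, rfl⟩
  simp [e_apply]

theorem mem_line_iff_forall_ne_zero : x ∈ line d c ↔ ∀ i ≠ 0, x i = c * e d 1 i := by
  rw [mem_line_iff, PiLp.ext_iff]
  refine forall_congr' fun i => ?_
  by_cases hi : i = 0 <;> simp [hi, e_apply]

theorem norm_sq_of_mem_line (h : x ∈ line d c) : ‖x‖ ^ 2 = x 0 ^ 2 + c ^ 2 := by
  rw [← norm_sq_smul_e_zero_add_smul_e_one d, ← mem_line_iff.mp h]

theorem DR_apply_zero (d : ℕ) (lam : ℝ) (x : Euc d) : DR d lam x 0 = x 0 / ‖x‖ := by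
  simp [DR, e_apply]

theorem DR_apply_of_ne_zero (lam : ℝ) (x : Euc d) (hi : i ≠ 0) :
    DR d lam x i = (1 - 1 / ‖x‖) * x i + lam * e d 1 i := by
  by_cases hi_one : i = 1
  · simp [DR, e_apply, hi_one]
  · have hi_two : 2 ≤ (i : ℕ) := by
      simp only [ne_eq, Fin.ext_iff, Fin.val_zero, Fin.val_one] at hi hi_one
      lia
    simp [DR, e_apply, hi, hi_one, hi_two]

theorem DR_apply_zero_eq_iff (lam : ℝ) (hx : x ≠ 0) :
    DR d lam x 0 = x 0 ↔ x 0 = 0 ∨ ‖x‖ = 1 := by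
  rw [DR_apply_zero, div_eq_iff (norm_ne_zero_iff.mpr hx), eq_comm, mul_right_eq_self₀, or_comm]

theorem DR_apply_eq_iff_of_ne_zero (lam : ℝ) (hx : x ≠ 0) (hi : i ≠ 0) :
    DR d lam x i = x i ↔ x i = lam * ‖x‖ * e d 1 i := by
  have hnorm : ‖x‖ ≠ 0 := norm_ne_zero_iff.mpr hx
  rw [DR_apply_of_ne_zero lam x hi]
  field_simp
  constructor <;> intro h <;> linarith

theorem DR_eq_self_iff (lam : ℝ) (hx : x ≠ 0) :
    DR d lam x = x ↔ (x 0 = 0 ∨ ‖x‖ = 1) ∧ x ∈ line d (lam * ‖x‖) := by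
  rw [mem_line_iff_forall_ne_zero, ← DR_apply_zero_eq_iff lam hx]
  constructor
  · intro h
    exact ⟨by rw [h], fun i hi => (DR_apply_eq_iff_of_ne_zero lam hx hi).mp (by rw [h])⟩
  · rintro ⟨h_zero, h_ne_zero⟩
    ext i
    by_cases hi : i = 0
    · exact hi ▸ h_zero
    · exact (DR_apply_eq_iff_of_ne_zero lam hx hi).mpr (h_ne_zero i hi)

theorem norm_eq_one_of_DR_eq_self (hlam : |lam| ≠ 1) (hx : x ≠ 0) (h : DR d lam x = x) :
    ‖x‖ = 1 := by
  obtain ⟨h_zero | h_norm, h_line⟩ := (DR_eq_self_iff lam hx).mp h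
  · have h_sq : ‖x‖ ^ 2 = (lam * ‖x‖) ^ 2 := by
      rw [norm_sq_of_mem_line h_line, h_zero]
      ring
    have h_abs : ‖x‖ = |lam| * ‖x‖ := by
      simpa [abs_mul] using (sq_eq_sq_iff_abs_eq_abs _ _).mp h_sq
    exact absurd ((right_eq_mul₀ (norm_ne_zero_iff.mpr hx)).mp h_abs) hlam
  · exact h_norm

theorem DR_eq_self_iff_mem_sphere_inter_line (hlam : |lam| ≠ 1) (hx : x ≠ 0) :
    DR d lam x = x ↔ x ∈ sphere 0 1 ∩ line d lam := by
  rw [mem_inter_iff, mem_sphere_zero_iff_norm]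
  constructor
  · intro h
    have h_norm : ‖x‖ = 1 := norm_eq_one_of_DR_eq_self hlam hx h
    exact ⟨h_norm, by simpa [h_norm] using ((DR_eq_self_iff lam hx).mp h).2⟩
  · rintro ⟨h_norm, h_line⟩
    exact (DR_eq_self_iff lam hx).mpr ⟨Or.inr h_norm, by simpa [h_norm] using h_line⟩

theorem sphere_inter_line_eq_pair (d : ℕ) (hlam : |lam| ≤ 1) :
    sphere 0 1 ∩ line d lam = {xStar d lam, xStarMinus d lam} := by
  have h_sqrt : √(1 - lam ^ 2) ^ 2 = 1 - lam ^ 2 :=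
    Real.sq_sqrt (sub_nonneg.mpr ((sq_le_one_iff_abs_le_one lam).mpr hlam))
  have norm_eq_one_iff (t : ℝ) :
      ‖t • e d 0 + lam • e d 1‖ = 1 ↔ t = √(1 - lam ^ 2) ∨ t = -√(1 - lam ^ 2) := by
    rw [← sq_eq_sq_iff_eq_or_eq_neg, h_sqrt, eq_sub_iff_add_eq,
      ← norm_sq_smul_e_zero_add_smul_e_one d,
      pow_eq_one_iff_of_nonneg (norm_nonneg _) two_ne_zero]
  ext x
  simp only [mem_inter_iff, mem_sphere_zero_iff_norm, mem_insert_iff, mem_singleton_iff]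
  constructor
  · rintro ⟨h_norm, t, rfl⟩
    exact ((norm_eq_one_iff t).mp h_norm).imp (by rintro rfl; rfl) (by rintro rfl; rfl)
  · rintro (rfl | rfl)
    · exact ⟨(norm_eq_one_iff _).mpr (Or.inl rfl), mem_range_self _⟩
    · exact ⟨(norm_eq_one_iff _).mpr (Or.inr rfl), mem_range_self _⟩

theorem stmt2_general (hlam : |lam| < 1) (hx : x ≠ 0) :
    DR d lam x = x ↔ x = xStar d lam ∨ x = xStarMinus d lam := by
  rw [DR_eq_self_iff_mem_sphere_inter_line hlam.ne hx, sphere_inter_line_eq_pair d hlam.le,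
    mem_insert_iff, mem_singleton_iff]

end

/-- For `λ ∈ [0,1)` and `x ≠ 0`, `T x = x` iff `x = x*` or `x = x_*`. -/
theorem stmt2 (d : ℕ) (lam : ℝ) (h0 : 0 ≤ lam) (h1 : lam < 1) (x : Euc d) (hx : x ≠ 0) :
    DR d lam x = x ↔ x = xStar d lam ∨ x = xStarMinus d lam :=
  stmt2_general (abs_lt.mpr ⟨by linarith, h1⟩) hx
end
end

section
/- Let d ≥ 2 and λ ∈ [0,1). Define F : Δ → ℝ by F(x) = ½‖x − λe₂‖² − λ log(1 + √(1 − x₁²)) + λ√(1 − x₁²) + (λ−1) log x₁, and let x* = √(1−λ²) e₁ + λ e₂. Then F(x*) < F(x) for every x ∈ Δ with x ≠ x*. -/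
noncomputable section

open Metric Set Filter

/-- The Lyapunov-type function of Benoist:
`F(x) = ½‖x − λe₂‖² − λ log(1 + √(1 − x₁²)) + λ√(1 − x₁²) + (λ−1) log x₁`. -/
def F (d : ℕ) (lam : ℝ) (x : Euc d) : ℝ :=
  (1 / 2) * ‖x - lam • e d 1‖ ^ 2 - lam * Real.log (1 + Real.sqrt (1 - (x 0) ^ 2)) +
    lam * Real.sqrt (1 - (x 0) ^ 2) + (lam - 1) * Real.log (x 0)

/-- `Δ = {x : 0 < x₁ ≤ 1}`. -/
def Delta (d : ℕ) : Set (Euc d) := {x | 0 < x 0 ∧ x 0 ≤ 1}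

/-!
Put `s = √(1 - x₁²)`, so that `2 log x₁ = log (1 + s) + log (1 - s)`. By Pythagoras `F x` is a
function `g s` plus half the squared distance from `x` to `x₁ e₁ + λ e₂`, and
`g' s = (s - λ) s² / (1 - s²)`. Hence `g` has a strict minimum over `[0, 1)` at `s = λ`, and the two
terms are simultaneously minimal only at `x*`.
-/

theorem norm_sub_apply_smul_single_sq {ι : Type*} [Fintype ι] [DecidableEq ι]
    (y : EuclideanSpace ℝ ι) (i : ι) :
    ‖y - y i • EuclideanSpace.single i (1 : ℝ)‖ ^ 2 = ‖y‖ ^ 2 - y i ^ 2 := by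
  rw [norm_sub_sq_real, inner_smul_right, EuclideanSpace.inner_single_right, norm_smul,
    PiLp.norm_single, mul_pow, Real.norm_eq_abs, sq_abs]
  simp only [conj_trivial, norm_one]
  ring

theorem sqrt_one_sub_sq_lt_one {a : ℝ} (ha : a ≠ 0) : √(1 - a ^ 2) < 1 := by
  rw [Real.sqrt_lt' one_pos, one_pow]
  exact sub_lt_self 1 (by positivity)

theorem sqrt_one_sub_sqrt_one_sub_sq_sq {a : ℝ} (ha₀ : 0 ≤ a) (ha₁ : a ≤ 1) :
    √(1 - √(1 - a ^ 2) ^ 2) = a := by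
  rw [Real.sq_sqrt (sub_nonneg.2 (pow_le_one₀ ha₀ ha₁)), sub_sub_cancel, Real.sqrt_sq ha₀]

theorem log_one_add_sqrt_add_log_one_sub_sqrt {a : ℝ} (ha₀ : a ≠ 0) (ha₁ : a ^ 2 ≤ 1) :
    Real.log (1 + √(1 - a ^ 2)) + Real.log (1 - √(1 - a ^ 2)) = 2 * Real.log a := by
  have one_add_pos : 0 < 1 + √(1 - a ^ 2) := by positivity
  have one_sub_pos : 0 < 1 - √(1 - a ^ 2) := sub_pos.2 (sqrt_one_sub_sq_lt_one ha₀)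
  have mul_eq : (1 + √(1 - a ^ 2)) * (1 - √(1 - a ^ 2)) = a ^ 2 := by
    linear_combination -Real.sq_sqrt (sub_nonneg.2 ha₁)
  rw [← Real.log_mul one_add_pos.ne' one_sub_pos.ne', mul_eq, Real.log_pow, Nat.cast_ofNat]

/-- The minimum of `F` over the slice `{x ∈ Δ | √(1 - x₁²) = s}`, as a function of
`s ∈ [0, 1)`; the term `log x₁` is expressed through `log (1 + s)` and `log (1 - s)`. -/
def sliceMin (lam s : ℝ) : ℝ :=
  (1 - s ^ 2) / 2 + lam * s - (1 + lam) / 2 * Real.log (1 + s) - (1 - lam) / 2 * Real.log (1 - s)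

theorem hasDerivAt_sliceMin (lam : ℝ) {s : ℝ} (hs : s ^ 2 ≠ 1) :
    HasDerivAt (sliceMin lam) ((s - lam) * s ^ 2 / (1 - s ^ 2)) s := by
  have factor : 1 - s ^ 2 = (1 + s) * (1 - s) := by ring
  obtain ⟨hadd, hsub⟩ : 1 + s ≠ 0 ∧ 1 - s ≠ 0 :=
    mul_ne_zero_iff.1 (factor ▸ sub_ne_zero.2 hs.symm)
  have quadratic := ((hasDerivAt_pow 2 s).const_sub 1).div_const 2
  have linear := (hasDerivAt_id s).const_mul lam
  have log_add := (((hasDerivAt_id s).const_add 1).log hadd).const_mul ((1 + lam) / 2)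
  have log_sub := (((hasDerivAt_id s).const_sub 1).log hsub).const_mul ((1 - lam) / 2)
  refine (((quadratic.add linear).sub log_add).sub log_sub).congr_deriv ?_
  rw [factor]
  simp only [id]
  field_simp
  ring

theorem continuousOn_sliceMin (lam : ℝ) : ContinuousOn (sliceMin lam) (Ico 0 1) := fun _ hs =>
  (hasDerivAt_sliceMin lam (pow_lt_one₀ hs.1 hs.2 two_ne_zero).ne).continuousAt.continuousWithinAt

theorem strictAntiOn_sliceMin {lam : ℝ} (hlam : lam < 1) :
    StrictAntiOn (sliceMin lam) (Icc 0 lam) := by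
  refine strictAntiOn_of_deriv_neg (convex_Icc 0 lam)
    ((continuousOn_sliceMin lam).mono (Icc_subset_Ico_right hlam)) fun s hs => ?_
  obtain ⟨s_pos, s_lt⟩ := interior_Icc.subset hs
  have sq_lt : s ^ 2 < 1 := pow_lt_one₀ s_pos.le (s_lt.trans hlam) two_ne_zero
  rw [(hasDerivAt_sliceMin lam sq_lt.ne).deriv]
  exact div_neg_of_neg_of_pos (mul_neg_of_neg_of_pos (sub_neg.2 s_lt) (pow_pos s_pos 2))
    (sub_pos.2 sq_lt)

theorem strictMonoOn_sliceMin {lam : ℝ} (hlam : 0 ≤ lam) :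
    StrictMonoOn (sliceMin lam) (Ico lam 1) := by
  refine strictMonoOn_of_deriv_pos (convex_Ico lam 1)
    ((continuousOn_sliceMin lam).mono (Ico_subset_Ico_left hlam)) fun s hs => ?_
  obtain ⟨lt_s, s_lt⟩ := interior_Ico.subset hs
  have s_pos : 0 < s := hlam.trans_lt lt_s
  have sq_lt : s ^ 2 < 1 := pow_lt_one₀ s_pos.le s_lt two_ne_zero
  rw [(hasDerivAt_sliceMin lam sq_lt.ne).deriv]
  exact div_pos (mul_pos (sub_pos.2 lt_s) (pow_pos s_pos 2)) (sub_pos.2 sq_lt)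

theorem sliceMin_self_lt {lam s : ℝ} (h0 : 0 ≤ lam) (h1 : lam < 1) (hs : s ∈ Ico 0 1)
    (hne : s ≠ lam) : sliceMin lam lam < sliceMin lam s := by
  rcases hne.lt_or_gt with s_lt | lt_s
  · exact strictAntiOn_sliceMin h1 ⟨hs.1, s_lt.le⟩ ⟨h0, le_rfl⟩ s_lt
  · exact strictMonoOn_sliceMin h0 ⟨le_rfl, h1⟩ ⟨lt_s.le, hs.2⟩ lt_s

theorem F_eq_sliceMin_add {d : ℕ} (lam : ℝ) {x : Euc d} (hx : x ∈ Delta d) :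
    F d lam x =
      sliceMin lam √(1 - x 0 ^ 2) + 1 / 2 * ‖x - (x 0 • e d 0 + lam • e d 1)‖ ^ 2 := by
  obtain ⟨x_pos, x_le⟩ := hx
  have sq_le : x 0 ^ 2 ≤ 1 := pow_le_one₀ x_pos.le x_le
  have pythagoras : ‖x - (x 0 • e d 0 + lam • e d 1)‖ ^ 2 = ‖x - lam • e d 1‖ ^ 2 - x 0 ^ 2 := by
    have coord : (x - lam • e d 1) 0 = x 0 := by simp [e]
    rw [← sub_sub, sub_right_comm, ← coord]
    exact norm_sub_apply_smul_single_sq _ 0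
  rw [F, sliceMin, pythagoras]
  linear_combination (1 - lam) / 2 * log_one_add_sqrt_add_log_one_sub_sqrt x_pos.ne' sq_le +
    1 / 2 * Real.sq_sqrt (sub_nonneg.2 sq_le)

theorem xStar_apply_zero (d : ℕ) (lam : ℝ) : xStar d lam 0 = √(1 - lam ^ 2) := by
  simp [xStar, e]

theorem xStar_mem_Delta (d : ℕ) {lam : ℝ} (hlam : lam ^ 2 < 1) : xStar d lam ∈ Delta d := by
  rw [Delta, mem_ofPred_eq, xStar_apply_zero]
  exact ⟨Real.sqrt_pos.2 (sub_pos.2 hlam), Real.sqrt_le_one.2 (sub_le_self 1 (sq_nonneg lam))⟩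

theorem F_xStar (d : ℕ) {lam : ℝ} (h0 : 0 ≤ lam) (h1 : lam < 1) :
    F d lam (xStar d lam) = sliceMin lam lam := by
  rw [F_eq_sliceMin_add lam (xStar_mem_Delta d (pow_lt_one₀ h0 h1 two_ne_zero)), xStar_apply_zero,
    sqrt_one_sub_sqrt_one_sub_sq_sq h0 h1.le, ← xStar, sub_self, norm_zero]
  ring

/-- For `λ ∈ [0,1)`, `F(x*) < F(x)` for every `x ∈ Δ` with `x ≠ x*`. -/
theorem stmt3 (d : ℕ) (lam : ℝ) (h0 : 0 ≤ lam) (h1 : lam < 1) :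
    ∀ x ∈ Delta d, x ≠ xStar d lam → F d lam (xStar d lam) < F d lam x := by
  intro x hx hne
  rw [F_xStar d h0 h1, F_eq_sliceMin_add lam hx]
  by_cases hs : √(1 - x 0 ^ 2) = lam
  · have hx0 : x 0 = √(1 - lam ^ 2) := by
      rw [← hs, sqrt_one_sub_sqrt_one_sub_sq_sq hx.1.le hx.2]
    have dist_pos : 0 < ‖x - (x 0 • e d 0 + lam • e d 1)‖ := by
      rw [hx0, ← xStar]
      exact norm_sub_pos_iff.2 hne
    rw [hs]
    exact lt_add_of_pos_right _ (by positivity)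
  · have hs_mem : √(1 - x 0 ^ 2) ∈ Ico 0 1 :=
      ⟨Real.sqrt_nonneg _, sqrt_one_sub_sq_lt_one hx.1.ne'⟩
    exact lt_add_of_lt_of_nonneg (sliceMin_self_lt h0 h1 hs_mem hs) (by positivity)
end
end

section
/- Let d ≥ 2 and λ ∈ [0,1). Define F : Δ → ℝ by F(x) = ½‖x − λe₂‖² − λ log(1 + √(1 − x₁²)) + λ√(1 − x₁²) + (λ−1) log x₁, T x = (x₁/‖x‖) e₁ + ((1 − 1/‖x‖) x₂ + λ) e₂ + (1 − 1/‖x‖) ∑_{j=3}^d x_j e_j, and x* = √(1−λ²) e₁ + λ e₂. Then for every t > 0 there exists c > 0 such that F(x) − F(T x) ≥ c for every x ∈ Δ with ‖x − x*‖ ≥ t; i.e., sup_{x ∈ Δ \ B(x*,t)} [F(T x) − F(x)] < 0. -/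
noncomputable section

open Metric Set Filter

/-!
Let `ρ` be the distance from `x` to the axis `ℝ e₁`, `v = ρ / ‖x‖` and `w = √(1 - x₁²)`. Then
`F x - F (T x) = λ (ρ - x₂) + planarDecrease λ v w`, where `x₂ ≤ ρ`. As a function of `w`,
`planarDecrease λ v w` has derivative `w / √(1 - w²) * (axialSlope λ w - axialSlope λ v)`, and
`axialSlope λ` is convex, so for `w ≤ v` the minimum is attained at `w = 0` or `w = v`. At `w = 0`
it is a quadratic polynomial in `λ`, bounded below by completing the square when `v` is small and by
its value at `λ = 1` when `v` is large. Altogether `(v - λ)² / 100 ≤ planarDecrease λ v w`. Hence if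
the decrease tends to zero along points of `Δ`, then `v → λ`, next `w → λ` since `axialPotential λ`
has its strict minimum at `λ`, and `λ (ρ - x₂) → 0`; together these force `x → x*`.
-/

namespace DouglasRachford

open Real Topology

lemma le_of_hasDerivAt_nonneg {f f' : ℝ → ℝ} {x y : ℝ} (hxy : x ≤ y)
    (hf : ∀ s ∈ Icc x y, HasDerivAt f (f' s) s) (hf' : ∀ s ∈ Icc x y, 0 ≤ f' s) : f x ≤ f y :=
  monotoneOn_of_hasDerivWithinAt_nonneg (convex_Icc x y)
    (fun s hs => (hf s hs).continuousAt.continuousWithinAt)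
    (fun s hs => (hf s (interior_subset hs)).hasDerivWithinAt)
    (fun s hs => hf' s (interior_subset hs))
    (left_mem_Icc.2 hxy) (right_mem_Icc.2 hxy) hxy

lemma le_of_hasDerivAt_nonpos {f f' : ℝ → ℝ} {x y : ℝ} (hxy : x ≤ y)
    (hf : ∀ s ∈ Icc x y, HasDerivAt f (f' s) s) (hf' : ∀ s ∈ Icc x y, f' s ≤ 0) : f y ≤ f x :=
  neg_le_neg_iff.1 <| le_of_hasDerivAt_nonneg (f := -f) hxy (fun s hs => (hf s hs).neg)
    fun s hs => neg_nonneg.2 (hf' s hs)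

lemma tendsto_zero_of_tendsto_pow_zero {ι : Type*} {f : Filter ι} {y : ι → ℝ} {n : ℕ}
    (h : Tendsto (fun i => y i ^ n) f (𝓝 0)) : Tendsto y f (𝓝 0) := by
  rw [Metric.tendsto_nhds] at h ⊢
  intro ε hε
  filter_upwards [h (ε ^ n) (by positivity)] with i hi
  rw [dist_zero_right, norm_pow] at hi
  rw [dist_zero_right]
  exact lt_of_pow_lt_pow_left₀ n hε.le hi

lemma one_sub_sq_pos {s : ℝ} (hs : s ∈ Ioo (-1) 1) : 0 < 1 - s ^ 2 := by
  nlinarith [hs.1, hs.2]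

lemma sqrt_one_sub_sq_pos {s : ℝ} (hs : s ∈ Ioo (-1) 1) : 0 < √(1 - s ^ 2) :=
  sqrt_pos.2 (one_sub_sq_pos hs)

lemma sq_sqrt_one_sub_sq {s : ℝ} (hs : s ∈ Ioo (-1) 1) : √(1 - s ^ 2) ^ 2 = 1 - s ^ 2 :=
  sq_sqrt (one_sub_sq_pos hs).le

lemma sqrt_one_sub_sq_mem_Ico {a : ℝ} (ha : 0 < a) : √(1 - a ^ 2) ∈ Ico 0 1 := by
  refine ⟨sqrt_nonneg _, (sqrt_lt' one_pos).2 ?_⟩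
  linarith [pow_pos ha 2]

lemma sqrt_one_sub_sq_sqrt_one_sub_sq {a : ℝ} (ha : a ∈ Icc 0 1) :
    √(1 - √(1 - a ^ 2) ^ 2) = a := by
  rw [sq_sqrt (by nlinarith [ha.1, ha.2]), sub_sub_cancel, sqrt_sq ha.1]

lemma one_sub_div_sqrt_one_sub_sq {s : ℝ} (hs : s ≤ 1) :
    (1 - s) / √(1 - s ^ 2) = √((1 - s) / (1 + s)) := by
  have hsub : 0 ≤ 1 - s := sub_nonneg.2 hs
  rw [show 1 - s ^ 2 = (1 - s) * (1 + s) by ring, sqrt_mul hsub, sqrt_div hsub,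
    ← div_div, div_sqrt]

lemma hasDerivAt_sqrt_one_sub_sq {s : ℝ} (hs : s ∈ Ioo (-1) 1) :
    HasDerivAt (fun s => √(1 - s ^ 2)) (-s / √(1 - s ^ 2)) s := by
  refine (((hasDerivAt_pow 2 s).const_sub 1).sqrt (one_sub_sq_pos hs).ne').congr_deriv ?_
  have := sqrt_one_sub_sq_pos hs
  field_simp
  norm_num

lemma hasDerivAt_log_one_add {s : ℝ} (hs : -1 < s) :
    HasDerivAt (fun s => log (1 + s)) (1 / (1 + s)) s :=
  ((hasDerivAt_id' s).const_add 1).log (by linarith)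

lemma hasDerivAt_log_sqrt_one_sub_sq {s : ℝ} (hs : s ∈ Ioo (-1) 1) :
    HasDerivAt (fun s => log √(1 - s ^ 2)) (-s / (1 - s ^ 2)) s := by
  have hpos := sqrt_one_sub_sq_pos hs
  refine ((hasDerivAt_sqrt_one_sub_sq hs).log hpos.ne').congr_deriv ?_
  rw [div_div, ← pow_two, sq_sqrt_one_sub_sq hs]

/-- The part of `F` that depends on the first coordinate alone, as a function of
`s = √(1 - x₁²)`: on `Δ`, `F x = (x₂ - λ)² / 2 + ∑_{j ≥ 3} x_j² / 2 + axialPotential λ s`. -/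
def axialPotential (lam s : ℝ) : ℝ :=
  (1 - s ^ 2) / 2 - lam * log (1 + s) + lam * s + (lam - 1) * log √(1 - s ^ 2)

/-- Minus the derivative of `axialPotential` with respect to `x₁ = √(1 - s²)`. -/
def axialSlope (lam s : ℝ) : ℝ := s * (s - lam) / √(1 - s ^ 2)

/-- The decrease `F x - F (T x)` for a point `x` of the half plane `x₂ ≥ 0` of `span {e₁, e₂}`, in
terms of `v = x₂ / ‖x‖` and `w = √(1 - x₁²)`. There `x - T x` is orthogonal to the gradient of `F`
at `T x`, so the decrease is a Bregman distance. -/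
def planarDecrease (lam v w : ℝ) : ℝ :=
  (v - lam) ^ 2 / 2 + (axialPotential lam w - axialPotential lam v) +
    axialSlope lam v * (√(1 - w ^ 2) - √(1 - v ^ 2))

lemma axialPotential_zero (lam : ℝ) : axialPotential lam 0 = 1 / 2 := by simp [axialPotential]

lemma hasDerivAt_axialPotential (lam : ℝ) {s : ℝ} (hs : s ∈ Ioo (-1) 1) :
    HasDerivAt (axialPotential lam) (s ^ 2 * (s - lam) / (1 - s ^ 2)) s := by
  have hquad := ((hasDerivAt_pow 2 s).const_sub 1).div_const 2
  refine (((hquad.sub ((hasDerivAt_log_one_add hs.1).const_mul lam)).add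
    ((hasDerivAt_id' s).const_mul lam)).add
    ((hasDerivAt_log_sqrt_one_sub_sq hs).const_mul (lam - 1))).congr_deriv ?_
  have hadd : 1 + s ≠ 0 := by linarith [hs.1]
  have hsub : 1 - s ≠ 0 := by linarith [hs.2]
  rw [show 1 - s ^ 2 = (1 - s) * (1 + s) by ring]
  field_simp
  ring

lemma quartic_le_axialPotential_sub {lam w : ℝ} (hlam : lam ∈ Ico 0 1) (hw : w ∈ Ico 0 1) :
    (w - lam) ^ 2 * (3 * w ^ 2 + 2 * lam * w + lam ^ 2) / 12 ≤
      axialPotential lam w - axialPotential lam lam := by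
  -- `s² (s - λ) / (1 - s²)` has larger absolute value than `s² (s - λ)`, and the same sign.
  have hderiv (s : ℝ) (hs : s ∈ Ico 0 1) :
      HasDerivAt (fun s => axialPotential lam s - (s ^ 4 / 4 - lam * (s ^ 3 / 3)))
        (s ^ 4 / (1 - s ^ 2) * (s - lam)) s := by
    have hs' : s ∈ Ioo (-1) 1 := ⟨by linarith [hs.1], hs.2⟩
    refine ((hasDerivAt_axialPotential lam hs').sub (((hasDerivAt_pow 4 s).div_const 4).sub
      (((hasDerivAt_pow 3 s).div_const 3).const_mul lam))).congr_deriv ?_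
    have := (one_sub_sq_pos hs').ne'
    field_simp
    ring
  have hweight (s : ℝ) (hs : s ∈ Ico 0 1) : 0 ≤ s ^ 4 / (1 - s ^ 2) :=
    div_nonneg (by positivity) (one_sub_sq_pos ⟨by linarith [hs.1], hs.2⟩).le
  rcases le_total lam w with h | h
  · have hmem : ∀ s ∈ Icc lam w, s ∈ Ico 0 1 :=
      fun s hs => ⟨hlam.1.trans hs.1, hs.2.trans_lt hw.2⟩
    linarith [le_of_hasDerivAt_nonneg h (fun s hs => hderiv s (hmem s hs))
      fun s hs => mul_nonneg (hweight s (hmem s hs)) (sub_nonneg.2 hs.1)]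
  · have hmem : ∀ s ∈ Icc w lam, s ∈ Ico 0 1 :=
      fun s hs => ⟨hw.1.trans hs.1, hs.2.trans_lt hlam.2⟩
    linarith [le_of_hasDerivAt_nonpos h (fun s hs => hderiv s (hmem s hs))
      fun s hs => mul_nonpos_of_nonneg_of_nonpos (hweight s (hmem s hs)) (sub_nonpos.2 hs.2)]

lemma axialSlope_self (lam : ℝ) : axialSlope lam lam = 0 := by simp [axialSlope]

lemma axialSlope_zero (lam : ℝ) : axialSlope lam 0 = 0 := by simp [axialSlope]

lemma axialSlope_nonneg {lam s : ℝ} (hs : 0 ≤ s) (h : lam ≤ s) : 0 ≤ axialSlope lam s :=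
  div_nonneg (mul_nonneg hs (sub_nonneg.2 h)) (sqrt_nonneg _)

lemma axialSlope_nonpos {lam s : ℝ} (hs : 0 ≤ s) (h : s ≤ lam) : axialSlope lam s ≤ 0 :=
  div_nonpos_of_nonpos_of_nonneg (mul_nonpos_of_nonneg_of_nonpos hs (sub_nonpos.2 h))
    (sqrt_nonneg _)

lemma hasDerivAt_axialSlope (lam : ℝ) {s : ℝ} (hs : s ∈ Ioo (-1) 1) :
    HasDerivAt (axialSlope lam) ((2 * s - s ^ 3 - lam) / √(1 - s ^ 2) ^ 3) s := by
  have hpos := sqrt_one_sub_sq_pos hs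
  refine (((hasDerivAt_id' s).mul ((hasDerivAt_id' s).sub_const lam)).div
    (hasDerivAt_sqrt_one_sub_sq hs) hpos.ne').congr_deriv ?_
  simp only [Pi.mul_apply]
  field_simp
  rw [sq_sqrt_one_sub_sq hs]
  ring

lemma hasDerivAt_deriv_axialSlope (lam : ℝ) {s : ℝ} (hs : s ∈ Ioo (-1) 1) :
    HasDerivAt (fun s => (2 * s - s ^ 3 - lam) / √(1 - s ^ 2) ^ 3)
      ((2 + s ^ 2 - 3 * s * lam) / √(1 - s ^ 2) ^ 5) s := by
  have hpos := sqrt_one_sub_sq_pos hs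
  refine (((((hasDerivAt_id' s).const_mul 2).sub (hasDerivAt_pow 3 s)).sub_const lam).div
    ((hasDerivAt_sqrt_one_sub_sq hs).pow 3) (pow_pos hpos 3).ne').congr_deriv ?_
  have hfourth : √(1 - s ^ 2) ^ 4 = (1 - s ^ 2) ^ 2 := by
    rw [pow_mul _ 2 2, sq_sqrt_one_sub_sq hs]
  simp only [Pi.pow_apply, Pi.sub_apply]
  field_simp
  rw [sq_sqrt_one_sub_sq hs, hfourth]
  ring

lemma convexOn_axialSlope {lam : ℝ} (hlam : lam ∈ Icc (-1) 1) :
    ConvexOn ℝ (Ioo (-1) 1) (axialSlope lam) := by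
  have hsecond (s : ℝ) (hs : s ∈ Ioo (-1) 1) : 0 ≤ 2 + s ^ 2 - 3 * s * lam := by
    have hright : 0 ≤ (1 + lam) * ((1 - s) * (2 - s)) := mul_nonneg (by linarith [hlam.1])
      (mul_nonneg (by linarith [hs.2]) (by linarith [hs.2]))
    have hleft : 0 ≤ (1 - lam) * ((1 + s) * (2 + s)) := mul_nonneg (by linarith [hlam.2])
      (mul_nonneg (by linarith [hs.1]) (by linarith [hs.1]))
    linarith
  refine convexOn_of_hasDerivWithinAt2_nonneg (convex_Ioo _ _)
    (f' := fun s => (2 * s - s ^ 3 - lam) / √(1 - s ^ 2) ^ 3)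
    (f'' := fun s => (2 + s ^ 2 - 3 * s * lam) / √(1 - s ^ 2) ^ 5)
    (fun s hs => (hasDerivAt_axialSlope lam hs).continuousAt.continuousWithinAt) ?_ ?_ ?_
  all_goals rw [isOpen_Ioo.interior_eq]; intro s hs
  · exact (hasDerivAt_axialSlope lam hs).hasDerivWithinAt
  · exact (hasDerivAt_deriv_axialSlope lam hs).hasDerivWithinAt
  · exact div_nonneg (hsecond s hs) (by positivity)

lemma planarDecrease_self (lam v : ℝ) : planarDecrease lam v v = (v - lam) ^ 2 / 2 := by
  simp [planarDecrease]

lemma hasDerivAt_planarDecrease (lam v : ℝ) {s : ℝ} (hs : s ∈ Ioo (-1) 1) :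
    HasDerivAt (planarDecrease lam v)
      (s / √(1 - s ^ 2) * (axialSlope lam s - axialSlope lam v)) s := by
  refine ((((hasDerivAt_axialPotential lam hs).sub_const _).const_add _).add
    (((hasDerivAt_sqrt_one_sub_sq hs).sub_const _).const_mul _)).congr_deriv ?_
  have hs_slope : s ^ 2 * (s - lam) / (1 - s ^ 2) = s / √(1 - s ^ 2) * axialSlope lam s := by
    rw [axialSlope, div_mul_div_comm, ← pow_two (√_), sq_sqrt_one_sub_sq hs]
    ring
  rw [hs_slope]
  ring

lemma planarDecrease_le_of_axialSlope_ge {lam v x y : ℝ} (hx : 0 ≤ x) (hxy : x ≤ y) (hy : y < 1)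
    (h : ∀ s ∈ Icc x y, axialSlope lam v ≤ axialSlope lam s) :
    planarDecrease lam v x ≤ planarDecrease lam v y :=
  le_of_hasDerivAt_nonneg hxy
    (fun s hs => hasDerivAt_planarDecrease lam v ⟨by linarith [hs.1], by linarith [hs.2]⟩)
    fun s hs => mul_nonneg (div_nonneg (hx.trans hs.1) (sqrt_nonneg _)) (sub_nonneg.2 (h s hs))

lemma planarDecrease_le_of_axialSlope_le {lam v x y : ℝ} (hx : 0 ≤ x) (hxy : x ≤ y) (hy : y < 1)
    (h : ∀ s ∈ Icc x y, axialSlope lam s ≤ axialSlope lam v) :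
    planarDecrease lam v y ≤ planarDecrease lam v x :=
  le_of_hasDerivAt_nonpos hxy
    (fun s hs => hasDerivAt_planarDecrease lam v ⟨by linarith [hs.1], by linarith [hs.2]⟩)
    fun s hs => mul_nonpos_of_nonneg_of_nonpos (div_nonneg (hx.trans hs.1) (sqrt_nonneg _))
      (sub_nonpos.2 (h s hs))

lemma half_sq_le_planarDecrease_of_le {lam v w : ℝ} (hlam : 0 ≤ lam) (hlv : lam ≤ v) (hv : v < 1)
    (hw : w ∈ Ico 0 1) : (v - lam) ^ 2 / 2 ≤ planarDecrease lam v w := by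
  have hconvex := convexOn_axialSlope (lam := lam) ⟨by linarith, by linarith⟩
  rw [← planarDecrease_self]
  rcases le_total v w with hvw | hwv
  · refine planarDecrease_le_of_axialSlope_ge (hlam.trans hlv) hvw hw.2 fun s hs => ?_
    have hmax := hconvex.le_max_of_mem_Icc ⟨by linarith, by linarith⟩
      ⟨by linarith [hs.1], hs.2.trans_lt hw.2⟩ (⟨hlv, hs.1⟩ : v ∈ Icc lam s)
    rwa [axialSlope_self, max_eq_right (axialSlope_nonneg (by linarith [hs.1]) (hlv.trans hs.1))]
      at hmax
  · refine planarDecrease_le_of_axialSlope_le hw.1 hwv hv fun s hs => ?_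
    have hmax := hconvex.le_max_of_mem_Icc (x := 0) ⟨by linarith, by linarith⟩
      ⟨by linarith, hv⟩ (⟨hw.1.trans hs.1, hs.2⟩ : s ∈ Icc 0 v)
    rwa [axialSlope_zero, max_eq_right (axialSlope_nonneg (hlam.trans hlv) hlv)] at hmax

lemma min_le_planarDecrease {lam v w : ℝ} (hlam : lam ∈ Icc (-1) 1) (hw : 0 ≤ w) (hwv : w ≤ v)
    (hv : v < 1) :
    min (planarDecrease lam v 0) (planarDecrease lam v v) ≤ planarDecrease lam v w := by
  have hconvex := convexOn_axialSlope hlam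
  have hmem {s : ℝ} (h0 : 0 ≤ s) (hsv : s ≤ v) : s ∈ Ioo (-1 : ℝ) 1 := ⟨by linarith, by linarith⟩
  rcases le_or_gt (axialSlope lam w) (axialSlope lam v) with h | h
  · refine (min_le_right _ _).trans
      (planarDecrease_le_of_axialSlope_le hw hwv hv fun s hs => ?_)
    exact (hconvex.le_max_of_mem_Icc (hmem hw hwv) (hmem (hw.trans hwv) le_rfl) hs).trans_eq
      (max_eq_right h)
  · refine (min_le_left _ _).trans
      (planarDecrease_le_of_axialSlope_ge le_rfl hw (hwv.trans_lt hv) fun s hs => ?_)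
    have hmax := hconvex.le_max_of_mem_Icc (hmem hs.1 (hs.2.trans hwv))
      (hmem (hw.trans hwv) le_rfl) (⟨hs.2, hwv⟩ : w ∈ Icc s v)
    exact h.le.trans ((le_max_iff.1 hmax).resolve_right h.not_ge)

lemma axialSlope_sub_axialSlope_le {lam v s : ℝ} (hlam : lam ≤ 1) (hv : 0 ≤ v) (hvs : v ≤ s)
    (hs : s < 1) :
    axialSlope lam v - axialSlope lam s ≤ (s - v) * ((1 - s) / √(1 - s ^ 2)) := by
  -- The left side is monotone in `λ`; at `λ = 1`, `axialSlope 1 s = -s (1 - s) / √(1 - s²)`, where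
  -- `(1 - s) / √(1 - s²)` is antitone.
  have hpos_s := sqrt_one_sub_sq_pos (s := s) ⟨by linarith, hs⟩
  have hs0 : 0 ≤ s := hv.trans hvs
  have htan : v / √(1 - v ^ 2) ≤ s / √(1 - s ^ 2) := by gcongr
  have hratio : (1 - s) / √(1 - s ^ 2) ≤ (1 - v) / √(1 - v ^ 2) := by
    rw [one_sub_div_sqrt_one_sub_sq hs.le,
      one_sub_div_sqrt_one_sub_sq (hvs.trans hs.le)]
    gcongr
    linarith
  calc axialSlope lam v - axialSlope lam s
      = s * ((1 - s) / √(1 - s ^ 2)) - v * ((1 - v) / √(1 - v ^ 2)) -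
          (1 - lam) * (s / √(1 - s ^ 2) - v / √(1 - v ^ 2)) := by
        unfold axialSlope; ring
    _ ≤ s * ((1 - s) / √(1 - s ^ 2)) - v * ((1 - s) / √(1 - s ^ 2)) := by
        have := mul_nonneg (sub_nonneg.2 hlam) (sub_nonneg.2 htan)
        have := mul_le_mul_of_nonneg_left hratio hv
        linarith
    _ = (s - v) * ((1 - s) / √(1 - s ^ 2)) := by ring

lemma half_sq_sub_quarter_sq_le_planarDecrease {lam v w : ℝ} (hlam : lam ≤ 1) (hv : 0 ≤ v)
    (hvw : v ≤ w) (hw : w < 1) :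
    (v - lam) ^ 2 / 2 - (w - v) ^ 2 / 4 ≤ planarDecrease lam v w := by
  have hmem {s : ℝ} (hs : s ∈ Icc v w) : s ∈ Ioo (-1 : ℝ) 1 :=
    ⟨by linarith [hs.1], by linarith [hs.2]⟩
  have hderiv (s : ℝ) (hs : s ∈ Icc v w) :
      HasDerivAt (fun s => planarDecrease lam v s + (s - v) ^ 2 / 4)
        (s / √(1 - s ^ 2) * (axialSlope lam s - axialSlope lam v) + (s - v) / 2) s := by
    refine ((hasDerivAt_planarDecrease lam v (hmem hs)).add
      ((((hasDerivAt_id' s).sub_const v).pow 2).div_const 4)).congr_deriv ?_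
    simp only [Nat.add_one_sub_one, pow_one]
    ring
  have hnonneg (s : ℝ) (hs : s ∈ Icc v w) :
      0 ≤ s / √(1 - s ^ 2) * (axialSlope lam s - axialSlope lam v) + (s - v) / 2 := by
    have hs0 : 0 ≤ s := hv.trans hs.1
    have hslope := mul_le_mul_of_nonneg_left
      (axialSlope_sub_axialSlope_le hlam hv hs.1 (hs.2.trans_lt hw))
      (div_nonneg hs0 (sqrt_nonneg (1 - s ^ 2)))
    have hrational : s / √(1 - s ^ 2) * ((s - v) * ((1 - s) / √(1 - s ^ 2))) =
        (s - v) * (s / (1 + s)) := by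
      have hsub : 1 - s ≠ 0 := by linarith [hs.2]
      calc _ = (s - v) * (s * (1 - s)) / √(1 - s ^ 2) ^ 2 := by ring
        _ = _ := by
          rw [sq_sqrt_one_sub_sq (hmem hs), show 1 - s ^ 2 = (1 - s) * (1 + s) by ring]
          field_simp
    have hhalf : s / (1 + s) ≤ 1 / 2 := by
      rw [div_le_div_iff₀ (by linarith) two_pos]
      linarith [hs.2]
    have := mul_le_mul_of_nonneg_left hhalf (sub_nonneg.2 hs.1)
    linarith
  have hle := le_of_hasDerivAt_nonneg hvw hderiv hnonneg
  simp only [planarDecrease_self, sub_self] at hle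
  linarith

lemma quarter_sq_le_planarDecrease_of_ge {lam v w : ℝ} (hlam : lam < 1) (hv : 0 ≤ v)
    (hvlam : v ≤ lam) (hvw : v ≤ w) (hw : w < 1) : (v - lam) ^ 2 / 4 ≤ planarDecrease lam v w := by
  rcases le_total w lam with hwlam | hlamw
  · have := half_sq_sub_quarter_sq_le_planarDecrease hlam.le hv hvw hw
    have : (w - v) ^ 2 ≤ (lam - v) ^ 2 := by gcongr
    linarith
  · have hlam_le := half_sq_sub_quarter_sq_le_planarDecrease hlam.le hv hvlam hlam
    refine le_trans (by linarith) (hlam_le.trans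
      (planarDecrease_le_of_axialSlope_ge (hv.trans hvlam) hlamw hw fun s hs => ?_))
    exact (axialSlope_nonpos hv hvlam).trans (axialSlope_nonneg (by linarith [hs.1]) hs.1)

/-- `tan β - artanh (sin β)` as a function of `v = sin β`: the coefficient of `v - λ` in
`planarDecrease λ v 0`. -/
def tanSubArtanh (v : ℝ) : ℝ := v / √(1 - v ^ 2) - log (1 + v) + log √(1 - v ^ 2)

lemma tanSubArtanh_zero : tanSubArtanh 0 = 0 := by simp [tanSubArtanh]

lemma hasDerivAt_tanSubArtanh {s : ℝ} (hs : s ∈ Ioo (-1) 1) :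
    HasDerivAt tanSubArtanh ((1 - √(1 - s ^ 2)) / √(1 - s ^ 2) ^ 3) s := by
  have hpos := sqrt_one_sub_sq_pos hs
  have htan : HasDerivAt (fun s => s / √(1 - s ^ 2)) (1 / √(1 - s ^ 2) ^ 3) s := by
    refine ((hasDerivAt_id' s).div (hasDerivAt_sqrt_one_sub_sq hs) hpos.ne').congr_deriv ?_
    field_simp
    rw [sq_sqrt_one_sub_sq hs]
    ring
  have hartanh : -(1 / (1 + s)) + -s / (1 - s ^ 2) = -(1 / √(1 - s ^ 2) ^ 2) := by
    have hadd : 1 + s ≠ 0 := by linarith [hs.1]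
    have hsub : 1 - s ≠ 0 := by linarith [hs.2]
    rw [sq_sqrt_one_sub_sq hs, show 1 - s ^ 2 = (1 - s) * (1 + s) by ring]
    field_simp
    ring
  refine ((htan.sub (hasDerivAt_log_one_add hs.1)).add
    (hasDerivAt_log_sqrt_one_sub_sq hs)).congr_deriv ?_
  rw [sub_eq_add_neg, add_assoc, hartanh]
  field_simp
  ring

lemma tanSubArtanh_le {v : ℝ} (hv : v ∈ Ico 0 1) :
    tanSubArtanh v ≤ v ^ 3 / (5 * (1 - v ^ 2)) := by
  have hmem {s : ℝ} (hs : s ∈ Icc 0 v) : s ∈ Ioo (-1 : ℝ) 1 :=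
    ⟨by linarith [hs.1], by linarith [hs.2, hv.2]⟩
  have hderiv (s : ℝ) (hs : s ∈ Icc 0 v) :
      HasDerivAt (fun s => s ^ 3 / (5 * (1 - s ^ 2)) - tanSubArtanh s)
        (s ^ 2 * (3 - s ^ 2) / (5 * (1 - s ^ 2) ^ 2) -
          (1 - √(1 - s ^ 2)) / √(1 - s ^ 2) ^ 3) s := by
    have hne := (one_sub_sq_pos (hmem hs)).ne'
    refine (((hasDerivAt_pow 3 s).div (((hasDerivAt_pow 2 s).const_sub 1).const_mul 5)
      (mul_ne_zero (by norm_num) hne)).sub (hasDerivAt_tanSubArtanh (hmem hs))).congr_deriv ?_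
    congr 1
    field_simp
    ring
  have hnonneg (s : ℝ) (hs : s ∈ Icc 0 v) :
      0 ≤ s ^ 2 * (3 - s ^ 2) / (5 * (1 - s ^ 2) ^ 2) -
        (1 - √(1 - s ^ 2)) / √(1 - s ^ 2) ^ 3 := by
    obtain ⟨u, hu⟩ : ∃ u, u = √(1 - s ^ 2) := ⟨_, rfl⟩
    have hsq : 1 - s ^ 2 = u ^ 2 := by rw [hu, sq_sqrt_one_sub_sq (hmem hs)]
    have hpos : 0 < u := hu ▸ sqrt_one_sub_sq_pos (hmem hs)
    have hle : u ≤ 1 := by nlinarith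
    rw [← hu, show s ^ 2 = 1 - u ^ 2 by linarith, sub_sub_cancel,
      show (1 - u ^ 2) * (3 - (1 - u ^ 2)) / (5 * (u ^ 2) ^ 2) - (1 - u) / u ^ 3 =
        (1 - u) * ((1 + u) * (2 + u ^ 2) - 5 * u) / (5 * u ^ 4) by field_simp; ring]
    have hcubic : 0 ≤ (1 + u) * (2 + u ^ 2) - 5 * u := by nlinarith [sq_nonneg (u - 3 / 4)]
    exact div_nonneg (mul_nonneg (sub_nonneg.2 hle) hcubic) (by positivity)
  have hle := le_of_hasDerivAt_nonneg hv.1 hderiv hnonneg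
  simp only [tanSubArtanh_zero] at hle
  linarith

lemma tanSubArtanh_le_or_one_sub_le {v : ℝ} (hv : v ∈ Ico 0 1) :
    tanSubArtanh v ≤ 2 / 5 * v ^ 2 ∨ 1 - v ≤ tanSubArtanh v := by
  rcases le_total v (31 / 40) with hsmall | hlarge
  · left
    have hpos := one_sub_sq_pos (s := v) ⟨by linarith [hv.1], hv.2⟩
    refine (tanSubArtanh_le hv).trans ?_
    rw [div_le_iff₀ (by positivity)]
    have hlin : v ≤ 2 * (1 - v ^ 2) := by nlinarith [hv.1]
    nlinarith [mul_le_mul_of_nonneg_left hlin (sq_nonneg v)]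
  · refine (le_total (tanSubArtanh v) (2 / 5 * v ^ 2)).imp id fun h => le_trans ?_ h
    nlinarith

lemma planarDecrease_zero (lam : ℝ) {v : ℝ} (hv : v ∈ Ioo (-1) 1) :
    planarDecrease lam v 0 = axialPotential v 0 - axialPotential v v -
      (lam - v) * tanSubArtanh v + (lam - v) ^ 2 / 2 := by
  have hpos := sqrt_one_sub_sq_pos hv
  simp only [planarDecrease, axialPotential_zero]
  simp only [axialPotential, axialSlope, tanSubArtanh, zero_pow two_ne_zero, sub_zero, sqrt_one]
  field_simp
  ring

lemma one_hundredth_le_planarDecrease_one_zero {v : ℝ} (hv : v ∈ Ico 0 1) :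
    1 / 100 ≤ planarDecrease 1 v 0 := by
  have hmem : v ∈ Ioo (-1) 1 := ⟨by linarith [hv.1], hv.2⟩
  have hy : 0 < 1 + v := by linarith [hv.1]
  have hformula : planarDecrease 1 v 0 = 1 / 2 - v + log (1 + v) - v * √((1 - v) / (1 + v)) := by
    have hpos := sqrt_one_sub_sq_pos hmem
    rw [← one_sub_div_sqrt_one_sub_sq hv.2.le, planarDecrease, axialPotential_zero]
    simp only [axialPotential, axialSlope, zero_pow two_ne_zero, sub_zero, sqrt_one]
    field_simp
    ring
  -- AM-GM, with equality at `v = 4 / 5`.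
  have hamgm : √((1 - v) / (1 + v)) ≤ 1 / 6 + 3 / 2 * ((1 - v) / (1 + v)) := by
    have hsq := sq_sqrt (div_nonneg (sub_nonneg.2 hv.2.le) hy.le)
    nlinarith [sq_nonneg (√((1 - v) / (1 + v)) - 1 / 3)]
  have hlog : log 2 + 1 - 2 * (1 + v)⁻¹ ≤ log (1 + v) := by
    have := one_sub_inv_le_log_of_pos (half_pos hy)
    rw [log_div hy.ne' two_ne_zero, inv_div] at this
    rw [← div_eq_mul_inv]
    linarith
  have hrational : 577 / 500 ≤ (1 + v)⁻¹ + (1 + v) / 3 := by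
    rw [← sub_nonneg, show (1 + v)⁻¹ + (1 + v) / 3 - 577 / 500 =
      (1 + (1 + v) ^ 2 / 3 - 577 / 500 * (1 + v)) / (1 + v) by field_simp]
    exact div_nonneg (by nlinarith [sq_nonneg (1 + v - 1731 / 1000)]) hy.le
  calc (1 : ℝ) / 100 ≤ log 2 + 1 - 17 / 6 + 577 / 500 := by linarith [log_two_gt_d9]
    _ ≤ log (1 + v) + 3 * (1 + v)⁻¹ + (1 + v) / 3 - 17 / 6 := by linarith
    _ = 1 / 2 - v + log (1 + v) - v * (1 / 6 + 3 / 2 * ((1 - v) / (1 + v))) := by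
      field_simp
      ring
    _ ≤ planarDecrease 1 v 0 := by
      rw [hformula]
      gcongr
      exact hv.1

lemma sq_div_le_planarDecrease_zero {lam v : ℝ} (hv : 0 ≤ v) (hvlam : v ≤ lam) (hlam : lam < 1) :
    (v - lam) ^ 2 / 100 ≤ planarDecrease lam v 0 := by
  have hv_mem : v ∈ Ico 0 1 := ⟨hv, by linarith⟩
  have hv_mem' : v ∈ Ioo (-1) 1 := ⟨by linarith, by linarith⟩
  rcases tanSubArtanh_le_or_one_sub_le hv_mem with hsmall | hlarge
  · have hquartic := quartic_le_axialPotential_sub hv_mem (left_mem_Ico.2 one_pos)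
    have hlinear := mul_le_mul_of_nonneg_left hsmall (sub_nonneg.2 hvlam)
    rw [planarDecrease_zero lam hv_mem']
    nlinarith [sq_nonneg (v ^ 2 / 12 - (lam - v) / 5), sq_nonneg (v - lam)]
  · -- `planarDecrease · v 0` is a quadratic polynomial, antitone on `[v, v + tanSubArtanh v]`.
    have hanti : planarDecrease 1 v 0 ≤ planarDecrease lam v 0 := by
      rw [planarDecrease_zero lam hv_mem', planarDecrease_zero 1 hv_mem']
      nlinarith [mul_nonneg (sub_nonneg.2 hlam.le) (sub_nonneg.2 hlarge),
        mul_nonneg (sub_nonneg.2 hlam.le) (sub_nonneg.2 hlam.le)]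
    have hone := one_hundredth_le_planarDecrease_one_zero hv_mem
    nlinarith

lemma sq_div_le_planarDecrease {lam v w : ℝ} (hlam : lam ∈ Ico 0 1) (hv : v ∈ Ico 0 1)
    (hw : w ∈ Ico 0 1) : (v - lam) ^ 2 / 100 ≤ planarDecrease lam v w := by
  have hsq := sq_nonneg (v - lam)
  rcases le_total lam v with hlamv | hvlam
  · linarith [half_sq_le_planarDecrease_of_le hlam.1 hlamv hv.2 hw]
  rcases le_total v w with hvw | hwv
  · linarith [quarter_sq_le_planarDecrease_of_ge hlam.2 hv.1 hvlam hvw hw.2]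
  · refine le_trans (le_min (sq_div_le_planarDecrease_zero hv.1 hvlam hlam.2) ?_)
      (min_le_planarDecrease ⟨by linarith [hlam.1], hlam.2.le⟩ hw.1 hwv hv.2)
    rw [planarDecrease_self]
    linarith

lemma planarDecrease_nonneg {lam v w : ℝ} (hlam : lam ∈ Ico 0 1) (hv : v ∈ Ico 0 1)
    (hw : w ∈ Ico 0 1) : 0 ≤ planarDecrease lam v w :=
  le_trans (by positivity) (sq_div_le_planarDecrease hlam hv hw)

section Limits

variable {ι : Type*} {f : Filter ι} {lam : ℝ} {v w : ι → ℝ}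

lemma tendsto_of_tendsto_axialPotential (hlam : lam ∈ Ico 0 1) (hw : ∀ i, w i ∈ Ico 0 1)
    (h : Tendsto (fun i => axialPotential lam (w i)) f (𝓝 (axialPotential lam lam))) :
    Tendsto w f (𝓝 lam) := by
  have hquartic (i : ι) :
      (w i - lam) ^ 4 ≤ 24 * (axialPotential lam (w i) - axialPotential lam lam) := by
    have hle := quartic_le_axialPotential_sub hlam (hw i)
    have hcompare : (w i - lam) ^ 2 ≤ 2 * (3 * w i ^ 2 + 2 * lam * w i + lam ^ 2) := by
      nlinarith [mul_nonneg hlam.1 (hw i).1]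
    nlinarith [mul_le_mul_of_nonneg_left hcompare (sq_nonneg (w i - lam))]
  rw [← tendsto_sub_nhds_zero_iff] at h ⊢
  refine tendsto_zero_of_tendsto_pow_zero (n := 4)
    (squeeze_zero (fun i => by positivity) hquartic ?_)
  simpa using h.const_mul 24

lemma tendsto_left_of_tendsto_planarDecrease (hlam : lam ∈ Ico 0 1) (hv : ∀ i, v i ∈ Ico 0 1)
    (hw : ∀ i, w i ∈ Ico 0 1) (h : Tendsto (fun i => planarDecrease lam (v i) (w i)) f (𝓝 0)) :
    Tendsto v f (𝓝 lam) := by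
  rw [← tendsto_sub_nhds_zero_iff]
  refine tendsto_zero_of_tendsto_pow_zero (n := 2) (squeeze_zero (fun i => sq_nonneg _)
    (fun i => (div_le_iff₀' (by norm_num)).1 (sq_div_le_planarDecrease hlam (hv i) (hw i))) ?_)
  simpa using h.const_mul 100

lemma tendsto_right_of_tendsto_planarDecrease (hlam : lam ∈ Ico 0 1) (hv : ∀ i, v i ∈ Ico 0 1)
    (hw : ∀ i, w i ∈ Ico 0 1) (h : Tendsto (fun i => planarDecrease lam (v i) (w i)) f (𝓝 0)) :
    Tendsto w f (𝓝 lam) := by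
  have hv_lim := tendsto_left_of_tendsto_planarDecrease hlam hv hw h
  have hlam_mem : lam ∈ Ioo (-1) 1 := ⟨by linarith [hlam.1], hlam.2⟩
  have hslope_lim : Tendsto (fun i => axialSlope lam (v i)) f (𝓝 0) := by
    simpa only [axialSlope_self, Function.comp_def] using
      (hasDerivAt_axialSlope lam hlam_mem).continuousAt.tendsto.comp hv_lim
  have hpotential_lim := (hasDerivAt_axialPotential lam hlam_mem).continuousAt.tendsto.comp hv_lim
  have hbounded : IsBoundedUnder (· ≤ ·) f
      (norm ∘ fun i => √(1 - w i ^ 2) - √(1 - v i ^ 2)) := by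
    refine isBoundedUnder_of ⟨1, fun i => ?_⟩
    have hle_one (s : ℝ) : √(1 - s ^ 2) ≤ 1 := sqrt_le_one.2 (by linarith [sq_nonneg s])
    exact abs_sub_le_of_nonneg_of_le (sqrt_nonneg _) (hle_one _) (sqrt_nonneg _) (hle_one _)
  have hsq_lim : Tendsto (fun i => (v i - lam) ^ 2 / 2) f (𝓝 0) := by
    simpa using ((hv_lim.sub_const lam).pow 2).div_const 2
  refine tendsto_of_tendsto_axialPotential hlam hw ?_
  convert ((h.sub hsq_lim).add hpotential_lim).sub
    (hslope_lim.zero_mul_isBoundedUnder_le hbounded) using 2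
  · simp only [planarDecrease, Function.comp_apply]
    ring
  · ring

end Limits

section Geometry

variable {d : ℕ}

/-- The distance from `x` to the axis `ℝ e₁`. -/
def axisDist (x : Euc d) : ℝ := √(‖x‖ ^ 2 - x 0 ^ 2)

lemma sq_add_sq_le_norm_sq (x : Euc d) : x 0 ^ 2 + x 1 ^ 2 ≤ ‖x‖ ^ 2 := by
  rw [EuclideanSpace.real_norm_sq_eq, ← Finset.sum_pair (f := fun i => x i ^ 2) zero_ne_one]
  exact Finset.sum_le_univ_sum_of_nonneg fun i => sq_nonneg _

lemma sq_axisDist (x : Euc d) : axisDist x ^ 2 = ‖x‖ ^ 2 - x 0 ^ 2 :=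
  sq_sqrt (by linarith [sq_add_sq_le_norm_sq x, sq_nonneg (x 1)])

lemma apply_one_le_axisDist (x : Euc d) : x 1 ≤ axisDist x :=
  le_sqrt_of_sq_le (by linarith [sq_add_sq_le_norm_sq x])

lemma norm_pos_of_apply_zero_pos {x : Euc d} (hx : 0 < x 0) : 0 < ‖x‖ :=
  hx.trans_le ((le_abs_self _).trans (PiLp.norm_apply_le x 0))

lemma axisDist_div_norm_mem_Ico {x : Euc d} (hx : 0 < x 0) : axisDist x / ‖x‖ ∈ Ico 0 1 := by
  refine ⟨div_nonneg (sqrt_nonneg _) (norm_nonneg _), ?_⟩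
  rw [div_lt_one (norm_pos_of_apply_zero_pos hx)]
  refine lt_of_pow_lt_pow_left₀ 2 (norm_nonneg x) ?_
  linarith [sq_axisDist x, pow_pos hx 2]

lemma div_norm_mem_Ioc {x : Euc d} (hx : 0 < x 0) : x 0 / ‖x‖ ∈ Ioc 0 1 :=
  ⟨div_pos hx (norm_pos_of_apply_zero_pos hx),
    div_le_one_of_le₀ ((le_abs_self _).trans (PiLp.norm_apply_le x 0)) (norm_nonneg x)⟩

lemma sqrt_one_sub_div_norm_sq {x : Euc d} (hx : x ≠ 0) :
    √(1 - (x 0 / ‖x‖) ^ 2) = axisDist x / ‖x‖ := by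
  have hne := norm_ne_zero_iff.2 hx
  rw [div_pow, one_sub_div (pow_ne_zero 2 hne), sqrt_div' _ (sq_nonneg _), sqrt_sq (norm_nonneg x),
    axisDist]

lemma sqrt_one_sub_axisDist_div_norm_sq {x : Euc d} (hx : 0 < x 0) :
    √(1 - (axisDist x / ‖x‖) ^ 2) = x 0 / ‖x‖ := by
  rw [← sqrt_one_sub_div_norm_sq (norm_pos_iff.1 (norm_pos_of_apply_zero_pos hx)),
    sqrt_one_sub_sq_sqrt_one_sub_sq (Ioc_subset_Icc_self (div_norm_mem_Ioc hx))]

lemma e_apply (i j : Fin (d + 2)) : e d j i = if i = j then 1 else 0 := by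
  simp [e]

lemma norm_e (j : Fin (d + 2)) : ‖e d j‖ = 1 := by simp [e]

lemma inner_e (x : Euc d) (j : Fin (d + 2)) : inner ℝ x (e d j) = x j := by
  simp [e, EuclideanSpace.inner_single_right]

lemma DR_apply_zero (lam : ℝ) (x : Euc d) : DR d lam x 0 = x 0 / ‖x‖ := by
  simp [DR, e_apply]

lemma DR_sub_smul_eq (lam : ℝ) (x : Euc d) :
    DR d lam x - lam • e d 1 = (1 - 1 / ‖x‖) • x + ((2 / ‖x‖ - 1) * x 0) • e d 0 := by
  ext j
  induction j using Fin.cases with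
  | zero =>
    have hzero : x 0 / ‖x‖ = (1 - ‖x‖⁻¹) * x 0 + (2 / ‖x‖ - 1) * x 0 := by ring
    simpa [DR, e_apply] using hzero
  | succ j =>
    induction j using Fin.cases with
    | zero => simp [DR, e_apply]
    | succ j =>
      have hne_one : j.succ.succ ≠ 1 := fun h => by simpa using congrArg Fin.val h
      simp [DR, e_apply, hne_one]

lemma DR_mem_Delta (lam : ℝ) {x : Euc d} (hx : 0 < x 0) : DR d lam x ∈ Delta d := by
  have hmem := div_norm_mem_Ioc hx
  rwa [← DR_apply_zero lam] at hmem

lemma norm_sub_smul_sq (lam : ℝ) (x : Euc d) :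
    ‖x - lam • e d 1‖ ^ 2 = ‖x‖ ^ 2 - 2 * lam * x 1 + lam ^ 2 := by
  rw [norm_sub_sq_real, real_inner_smul_right, inner_e, norm_smul, norm_e, mul_one, norm_eq_abs,
    sq_abs]
  ring

lemma norm_DR_sub_smul_sq (lam : ℝ) {x : Euc d} (hx : x ≠ 0) :
    ‖DR d lam x - lam • e d 1‖ ^ 2 = (‖x‖ - 1) ^ 2 + (2 / ‖x‖ - 1) * x 0 ^ 2 := by
  have hne := norm_ne_zero_iff.2 hx
  simp only [DR_sub_smul_eq, norm_add_sq_real, real_inner_smul_left, real_inner_smul_right,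
    inner_e, norm_smul, norm_e, mul_one, mul_pow, norm_eq_abs, sq_abs]
  field_simp
  ring

lemma norm_sub_xStar_sq {lam : ℝ} (hlam : lam ^ 2 ≤ 1) (x : Euc d) :
    ‖x - xStar d lam‖ ^ 2 = (x 0 - √(1 - lam ^ 2)) ^ 2 + (axisDist x - lam) ^ 2 +
      2 * (lam * (axisDist x - x 1)) := by
  have hsq := sq_sqrt (sub_nonneg.2 hlam)
  have hnorm : ‖xStar d lam‖ ^ 2 = 1 := by
    simp [xStar, norm_add_sq_real, norm_smul, inner_smul_left, inner_smul_right, inner_e, norm_e,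
      e_apply, hsq]
  have hinner : inner ℝ x (xStar d lam) = √(1 - lam ^ 2) * x 0 + lam * x 1 := by
    simp [xStar, inner_add_right, inner_smul_right, inner_e]
  rw [norm_sub_sq_real, hnorm, hinner]
  linear_combination -sq_axisDist x - hsq

lemma F_eq_add_axialPotential (lam : ℝ) {x : Euc d} (hx : x ∈ Delta d) :
    F d lam x = (‖x - lam • e d 1‖ ^ 2 - x 0 ^ 2) / 2 + axialPotential lam √(1 - x 0 ^ 2) := by
  have hx0 : x 0 ∈ Icc 0 1 := ⟨hx.1.le, hx.2⟩
  have hsq : √(1 - x 0 ^ 2) ^ 2 = 1 - x 0 ^ 2 := sq_sqrt (by nlinarith [hx.1, hx.2])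
  rw [F, axialPotential, sqrt_one_sub_sq_sqrt_one_sub_sq hx0, hsq]
  ring

lemma F_sub_F_DR_eq (lam : ℝ) {x : Euc d} (hx : x ∈ Delta d) :
    F d lam x - F d lam (DR d lam x) = lam * (axisDist x - x 1) +
      planarDecrease lam (axisDist x / ‖x‖) √(1 - x 0 ^ 2) := by
  have hpos := norm_pos_of_apply_zero_pos hx.1
  have hx0 := hx.1
  rw [F_eq_add_axialPotential lam hx, F_eq_add_axialPotential lam (DR_mem_Delta lam hx.1),
    norm_sub_smul_sq, norm_DR_sub_smul_sq lam (norm_pos_iff.1 hpos), DR_apply_zero,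
    sqrt_one_sub_div_norm_sq (norm_pos_iff.1 hpos), planarDecrease, axialSlope,
    sqrt_one_sub_axisDist_div_norm_sq hx.1, sqrt_one_sub_sq_sqrt_one_sub_sq ⟨hx0.le, hx.2⟩]
  linear_combination (norm := (field_simp; ring))
    (1 / (2 * ‖x‖ ^ 2) - 1 / ‖x‖) * sq_axisDist x

lemma F_sub_F_DR_nonneg {lam : ℝ} (hlam : lam ∈ Ico 0 1) {x : Euc d} (hx : x ∈ Delta d) :
    0 ≤ F d lam x - F d lam (DR d lam x) := by
  rw [F_sub_F_DR_eq lam hx]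
  refine add_nonneg (mul_nonneg hlam.1 (sub_nonneg.2 (apply_one_le_axisDist x))) ?_
  exact planarDecrease_nonneg hlam (axisDist_div_norm_mem_Ico hx.1) (sqrt_one_sub_sq_mem_Ico hx.1)

lemma tendsto_axisDist_of_tendsto {ι : Type*} {f : Filter ι} {lam : ℝ} {x : ι → Euc d}
    (hlam : lam ∈ Ioo (-1) 1) (hx : ∀ i, 0 < x i 0)
    (hzero : Tendsto (fun i => x i 0) f (𝓝 √(1 - lam ^ 2)))
    (hratio : Tendsto (fun i => axisDist (x i) / ‖x i‖) f (𝓝 lam)) :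
    Tendsto (fun i => axisDist (x i)) f (𝓝 lam) := by
  have hpos := sqrt_one_sub_sq_pos hlam
  have hlim := hzero.mul (hratio.div (((hratio.pow 2).const_sub 1).sqrt) hpos.ne')
  rw [mul_div_cancel₀ _ hpos.ne'] at hlim
  refine hlim.congr fun i => ?_
  have hnorm := norm_pos_of_apply_zero_pos (hx i)
  have hx0 := hx i
  rw [Pi.div_apply, sqrt_one_sub_axisDist_div_norm_sq (hx i)]
  field_simp

lemma tendsto_xStar_of_tendsto_F_sub_F_DR {ι : Type*} {f : Filter ι} {lam : ℝ} {x : ι → Euc d}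
    (hlam : lam ∈ Ico 0 1) (hx : ∀ i, x i ∈ Delta d)
    (h : Tendsto (fun i => F d lam (x i) - F d lam (DR d lam (x i))) f (𝓝 0)) :
    Tendsto x f (𝓝 (xStar d lam)) := by
  have hv (i : ι) := axisDist_div_norm_mem_Ico (hx i).1
  have hw (i : ι) := sqrt_one_sub_sq_mem_Ico (hx i).1
  have hoff_nonneg (i : ι) : 0 ≤ lam * (axisDist (x i) - x i 1) :=
    mul_nonneg hlam.1 (sub_nonneg.2 (apply_one_le_axisDist (x i)))
  have hplanar_nonneg (i : ι) := planarDecrease_nonneg hlam (hv i) (hw i)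
  simp only [F_sub_F_DR_eq lam (hx _)] at h
  have hoff_lim := squeeze_zero hoff_nonneg (fun i => le_add_of_nonneg_right (hplanar_nonneg i)) h
  have hplanar_lim :=
    squeeze_zero hplanar_nonneg (fun i => le_add_of_nonneg_left (hoff_nonneg i)) h
  have hv_lim := tendsto_left_of_tendsto_planarDecrease hlam hv hw hplanar_lim
  have hw_lim := tendsto_right_of_tendsto_planarDecrease hlam hv hw hplanar_lim
  have hzero_lim : Tendsto (fun i => x i 0) f (𝓝 √(1 - lam ^ 2)) :=
    ((hw_lim.pow 2).const_sub 1).sqrt.congr fun i =>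
      sqrt_one_sub_sq_sqrt_one_sub_sq ⟨(hx i).1.le, (hx i).2⟩
  have hdist_lim := tendsto_axisDist_of_tendsto ⟨by linarith [hlam.1], hlam.2⟩
    (fun i => (hx i).1) hzero_lim hv_lim
  rw [tendsto_iff_norm_sub_tendsto_zero]
  refine tendsto_zero_of_tendsto_pow_zero (n := 2) ?_
  simp only [norm_sub_xStar_sq (lam := lam) (by nlinarith [hlam.1, hlam.2])]
  simpa using (((tendsto_sub_nhds_zero_iff.2 hzero_lim).pow 2).add
    ((tendsto_sub_nhds_zero_iff.2 hdist_lim).pow 2)).add (hoff_lim.const_mul 2)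

end Geometry

end DouglasRachford

/-- For `λ ∈ [0,1)` and every `t > 0` there is `c > 0` with
`F(x) − F(T x) ≥ c` for every `x ∈ Δ` with `‖x − x*‖ ≥ t`; i.e.
`sup_{x ∈ Δ \ B(x*,t)} [F(T x) − F(x)] < 0`. -/
theorem stmt5 (d : ℕ) (lam : ℝ) (h0 : 0 ≤ lam) (h1 : lam < 1) :
    ∀ t : ℝ, 0 < t → ∃ c : ℝ, 0 < c ∧
      ∀ x ∈ Delta d, t ≤ ‖x - xStar d lam‖ →
        c ≤ F d lam x - F d lam (DR d lam x) := by
  intro t ht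
  by_contra! hsmall
  choose x hx hfar hlt using fun n : ℕ => hsmall (1 / (n + 1)) Nat.one_div_pos_of_nat
  have hdecrease : Tendsto (fun n => F d lam (x n) - F d lam (DR d lam (x n))) atTop (nhds 0) :=
    squeeze_zero (fun n => DouglasRachford.F_sub_F_DR_nonneg ⟨h0, h1⟩ (hx n))
      (fun n => (hlt n).le) tendsto_one_div_add_atTop_nhds_zero_nat
  have hlim := DouglasRachford.tendsto_xStar_of_tendsto_F_sub_F_DR ⟨h0, h1⟩ hx hdecrease
  rw [tendsto_iff_norm_sub_tendsto_zero] at hlim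
  exact ht.not_ge (ge_of_tendsto' hlim hfar)
end
end
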